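/- Let n ∈ ℕ and α a partition of n. For μ = (1^{m₁},2^{m₂},…) let a_μ = ∏_i i^{m_i}. Then (1) the restrictions of the irreducible characters χ^λ, λ < α, to classes of cycle type < α form a ℤ-basis for the ℤ-span of all character restrictions to those classes, and (2) det X_(α) = ∏_{μ < α} a_μ, where X_(α) = (χ^λ_μ)_{λ,μ < α}. -/

import Mathlib

open scoped Classical

namespace SnTable

variable {n : ℕ}

/-- The parts of a partition, listed in weakly decreasing order. -/
def descList (μ : Nat.Partition n) : List ℕ := (μ.parts.sort (· ≤ ·)).reverse

/-- Strict lexicographic order on partitions of `n` (comparing the lists of parts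
written in decreasing order). -/
def plex (μ ν : Nat.Partition n) : Prop := List.Lex (· < ·) (descList μ) (descList ν)

/-- Weak lexicographic order on partitions of `n`. -/
def plexLE (μ ν : Nat.Partition n) : Prop := μ = ν ∨ plex μ ν

/-- `a_μ = ∏ i^{m_i(μ)}`, the product of the parts of `μ`. -/
def aNum (μ : Nat.Partition n) : ℕ := μ.parts.prod

/-- `b_μ = ∏ m_i(μ)!`, the product of the factorials of the multiplicities. -/
def bNum (μ : Nat.Partition n) : ℕ :=
  ∏ i ∈ μ.parts.toFinset, (μ.parts.count i).factorial

/-- `z_μ = a_μ b_μ`, the centralizer order of an element of cycle type `μ` in `S_n`. -/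
def zNum (μ : Nat.Partition n) : ℕ := aNum μ * bNum μ

/-- The cycle type of a permutation of `Fin n`, as a partition of `n`. -/
def cycleTypePartition (g : Equiv.Perm (Fin n)) : Nat.Partition n :=
  (Fintype.card_fin n) ▸ g.partition

/-- The value at `g` of the permutation character `ξ^λ` of `S_n` obtained by inducing the
trivial character from the Young subgroup `S_λ`: it counts the ordered set partitions of
`Fin n` with block sizes `λ₁ ≥ λ₂ ≥ …` that are fixed by `g`. -/
def permChar (lam : Nat.Partition n) (g : Equiv.Perm (Fin n)) : ℕ :=
  Fintype.card {f : Fin n → Fin (descList lam).length //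
    (∀ x, f (g x) = f x) ∧
    ∀ j, (Finset.univ.filter fun x => f x = j).card = (descList lam).get j}

/-- `X` is the character table of the symmetric group `S_n`, with rows and columns indexed
by the partitions of `n`: each row is an irreducible character (as a class function, via
cycle types), distinct rows are distinct characters, and the labelling is the standard one,
pinned down by the fact that the transition matrix expressing the Young permutation
characters `ξ^λ` in terms of the rows of `X` is unitriangular with respect to the
lexicographic order. -/
def IsCharTable (X : Nat.Partition n → Nat.Partition n → ℤ) : Prop :=
  (∀ lam : Nat.Partition n, ∃ V : FDRep ℂ (Equiv.Perm (Fin n)),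
      CategoryTheory.Simple V ∧
      ∀ g : Equiv.Perm (Fin n), V.character g = (X lam (cycleTypePartition g) : ℂ)) ∧
  (∃ d : Nat.Partition n → Nat.Partition n → ℤ,
      (∀ lam, d lam lam = 1) ∧
      (∀ lam mu, d lam mu ≠ 0 → plexLE lam mu) ∧
      (∀ lam (g : Equiv.Perm (Fin n)),
        (permChar lam g : ℤ) = ∑ mu, d lam mu * X mu (cycleTypePartition g))) ∧
  Function.Injective X



theorem coe_descList (μ : Nat.Partition n) : (descList μ : Multiset ℕ) = μ.parts := by
  rw [descList, Multiset.coe_reverse, Multiset.sort_eq]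

theorem descList_injective : Function.Injective (descList (n := n)) := by
  intro μ ν h
  apply Nat.Partition.ext
  rw [← coe_descList, h, coe_descList]

@[reducible] noncomputable def pOrder (n : ℕ) : LinearOrder (Nat.Partition n) :=
  LinearOrder.lift' (descList (n := n)) descList_injective

/-- weight function -/
def hfun (N x : ℕ) : ℕ := x * (N + 1) ^ x

theorem hfun_mono (N : ℕ) {x y : ℕ} (h : x ≤ y) : hfun N x ≤ hfun N y := by
  unfold hfun
  gcongr
  omega

theorem hfun_pos (N : ℕ) {x : ℕ} (h : 0 < x) : 0 < hfun N x := by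
  unfold hfun
  positivity

theorem hfun_add (N x y : ℕ) : hfun N x + hfun N y ≤ hfun N (x + y) := by
  unfold hfun
  rw [add_mul]
  gcongr <;> omega

theorem hfun_sum (N : ℕ) {ι : Type*} (s : Finset ι) (f : ι → ℕ) :
    ∑ i ∈ s, hfun N (f i) ≤ hfun N (∑ i ∈ s, f i) := by
  induction s using Finset.induction_on with
  | empty => simp
  | insert a s ha ih =>
    rw [Finset.sum_insert ha, Finset.sum_insert ha]
    exact (Nat.add_le_add_left ih _).trans (hfun_add _ _ _)

theorem hfun_list_le (N x : ℕ) (l : List ℕ) (h : ∀ y ∈ l, y ≤ x) :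
    (l.map (hfun N)).sum ≤ l.length * hfun N x := by
  have := List.sum_le_card_nsmul (l.map (hfun N)) (hfun N x) (by
    intro y hy
    obtain ⟨z, hz, rfl⟩ := List.mem_map.mp hy
    exact hfun_mono N (h z hz))
  simpa using this

theorem lex_hfun (N : ℕ) (l₁ l₂ : List ℕ) (h : List.Lex (· < ·) l₁ l₂)
    (hs : l₁.Pairwise (· ≥ ·)) (hpos : ∀ y ∈ l₂, 0 < y) (hl : l₁.length ≤ N) :
    (l₁.map (hfun N)).sum < (l₂.map (hfun N)).sum := by
  induction h with
  | nil =>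
    rename_i b l
    have := hfun_pos N (hpos b (by simp))
    simp only [List.map_nil, List.sum_nil, List.map_cons, List.sum_cons]
    omega
  | cons h ih =>
    simp only [List.map_cons, List.sum_cons]
    have := ih (List.pairwise_cons.mp hs).2 (fun y hy => hpos y (by simp [hy]))
      (by simp at hl; omega)
    omega
  | rel h =>
    rename_i x l₁ y l₂
    have h1 := hfun_list_le N x (x :: l₁) (by
      intro z hz
      rcases List.mem_cons.mp hz with rfl | hz
      · exact le_rfl
      · exact (List.pairwise_cons.mp hs).1 z hz)
    have h2 : (x :: l₁).length * hfun N x ≤ N * hfun N x := Nat.mul_le_mul_right _ hl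
    have h3 : N * hfun N x < hfun N y := by
      refine lt_of_lt_of_le ?_ (hfun_mono N (Nat.succ_le_of_lt h))
      unfold hfun
      have : 0 < (N + 1) ^ x := by positivity
      rw [pow_succ]
      nlinarith [Nat.zero_le (N * x * (N+1)^x), Nat.zero_le (x * (N+1)^x), Nat.zero_le (N * (N+1)^x)]
    simp only [List.map_cons, List.sum_cons] at *
    omega

theorem plex_hfun {μ ν : Nat.Partition n} (h : plex μ ν) :
    (μ.parts.map (hfun n)).sum < (ν.parts.map (hfun n)).sum := by
  have := lex_hfun n _ _ h ?_ ?_ ?_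
  · rw [← coe_descList, ← coe_descList]
    simpa using this
  · unfold descList
    rw [List.pairwise_reverse]
    exact Multiset.pairwise_sort _ _
  · intro y hy
    apply ν.parts_pos
    rw [← coe_descList]
    exact hy
  · have h1 : (descList μ).length = μ.parts.card := by
      rw [← coe_descList]; simp
    rw [h1]
    have := Multiset.card_nsmul_le_sum (s := μ.parts) (a := 1) (fun x hx => μ.parts_pos hx)
    rw [μ.parts_sum] at this
    simpa using this

theorem cast_parts {m k : ℕ} (h : m = k) (p : Nat.Partition m) :
    (h ▸ p : Nat.Partition k).parts = p.parts := by
  subst h; rfl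

theorem ctp_parts (g : Equiv.Perm (Fin n)) :
    (cycleTypePartition g).parts = g.cycleType + Multiset.replicate (n - g.support.card) 1 := by
  unfold cycleTypePartition
  rw [cast_parts, Equiv.Perm.parts_partition, Fintype.card_fin]

theorem exists_orbits (g : Equiv.Perm (Fin n)) :
    ∃ (Ω : Type) (_ : Fintype Ω) (q : Fin n → Ω), Function.Surjective q ∧
      (∀ x, q (g x) = q x) ∧ (∀ x y, q x = q y → g.SameCycle x y) ∧
      (Finset.univ.val.map fun ω : Ω => (Finset.univ.filter fun x => q x = ω).card) =
        (cycleTypePartition g).parts := by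
  let q : Fin n → {x // g x = x} ⊕ {c // c ∈ g.cycleFactorsFinset} := fun x =>
    if h : g x = x then Sum.inl ⟨x, h⟩ else Sum.inr ⟨g.cycleOf x, by
      rw [Equiv.Perm.cycleOf_mem_cycleFactorsFinset_iff, Equiv.Perm.mem_support]; exact h⟩
  have q1 : ∀ x (h : g x = x), q x = Sum.inl ⟨x, h⟩ := fun x h => by simp only [q, dif_pos h]
  have q2 : ∀ x (h : g x ≠ x), q x = Sum.inr ⟨g.cycleOf x, by
      rw [Equiv.Perm.cycleOf_mem_cycleFactorsFinset_iff, Equiv.Perm.mem_support]; exact h⟩ :=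
    fun x h => by simp only [q, dif_neg h]
  refine ⟨_, inferInstance, q, ?_, ?_, ?_, ?_⟩
  · rintro (⟨x, hx⟩ | ⟨c, hc⟩)
    · exact ⟨x, q1 x hx⟩
    · obtain ⟨x, hx⟩ := (Equiv.Perm.mem_cycleFactorsFinset_iff.mp hc).1.nonempty_support
      have hgx : g x ≠ x := Equiv.Perm.mem_support.mp
        (Equiv.Perm.mem_cycleFactorsFinset_support_le hc hx)
      refine ⟨x, ?_⟩
      rw [q2 x hgx]
      congr 2
      exact (Equiv.Perm.cycle_is_cycleOf hx hc).symm
  · intro x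
    by_cases h : g x = x
    · rw [h]
    · have h' : g (g x) ≠ g x := fun h' => h (g.injective h')
      rw [q2 _ h, q2 _ h']
      congr 2
      apply Equiv.Perm.SameCycle.cycleOf_eq
      exact Equiv.Perm.sameCycle_apply_left.mpr (Equiv.Perm.SameCycle.refl _ _)
  · intro x y hxy
    by_cases hx : g x = x
    · by_cases hy : g y = y
      · rw [q1 x hx, q1 y hy] at hxy
        simp only [Sum.inl.injEq, Subtype.mk.injEq] at hxy
        rw [hxy]
      · rw [q1 x hx, q2 y hy] at hxy
        simp at hxy
    · by_cases hy : g y = y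
      · rw [q2 x hx, q1 y hy] at hxy
        simp at hxy
      · rw [q2 x hx, q2 y hy] at hxy
        simp only [Sum.inr.injEq, Subtype.mk.injEq] at hxy
        exact (Equiv.Perm.sameCycle_iff_cycleOf_eq_of_mem_support
          (Equiv.Perm.mem_support.mpr hx) (Equiv.Perm.mem_support.mpr hy)).mpr hxy
  · rw [ctp_parts, ← Finset.univ_disjSum_univ, Finset.val_disjSum, Multiset.disjSum,
      Multiset.map_add, Multiset.map_map, Multiset.map_map, add_comm]
    congr 1
    · rw [Equiv.Perm.cycleType_def]
      have : ∀ c : {c // c ∈ g.cycleFactorsFinset},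
          ((fun ω => (Finset.univ.filter fun x => q x = ω).card) ∘ Sum.inr) c
            = (Finset.card ∘ Equiv.Perm.support) c.1 := by
        rintro ⟨c, hc⟩
        simp only [Function.comp]
        congr 1
        ext x
        simp only [Finset.mem_filter, Finset.mem_univ, true_and]
        constructor
        · intro h
          by_cases hx : g x = x
          · rw [q1 x hx] at h; simp at h
          · rw [q2 x hx] at h
            simp only [Sum.inr.injEq, Subtype.mk.injEq] at h
            rw [← h, Equiv.Perm.mem_support_cycleOf_iff]
            exact ⟨Equiv.Perm.SameCycle.refl _ _, Equiv.Perm.mem_support.mpr hx⟩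
        · intro h
          have hgx : g x ≠ x := Equiv.Perm.mem_support.mp
            (Equiv.Perm.mem_cycleFactorsFinset_support_le hc h)
          rw [q2 x hgx]
          congr 2
          exact (Equiv.Perm.cycle_is_cycleOf h hc).symm
      refine (Multiset.map_congr rfl (g := fun c => (Finset.card ∘ Equiv.Perm.support) c.1)
        (fun c _ => ?_)).trans ?_
      · convert this c
      rw [Finset.univ_eq_attach, Finset.attach_val]
      exact Multiset.attach_map_val' _ _
    · have : ∀ y : {x // g x = x},
          ((fun ω => (Finset.univ.filter fun x => q x = ω).card) ∘ Sum.inl) y = 1 := by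
        rintro ⟨y, hy⟩
        simp only [Function.comp]
        rw [Finset.card_eq_one]
        refine ⟨y, ?_⟩
        ext x
        simp only [Finset.mem_filter, Finset.mem_univ, true_and, Finset.mem_singleton]
        constructor
        · intro h
          by_cases hx : g x = x
          · rw [q1 x hx] at h; simpa using h
          · rw [q2 x hx] at h; simp at h
        · rintro rfl
          exact q1 x hy
      refine (Multiset.map_congr rfl (g := fun _ => 1) (fun c _ => ?_)).trans ?_
      · convert this c
      rw [Multiset.map_const']
      congr 1
      rw [Finset.card_val, Finset.card_univ, Fintype.card_subtype]
      have := Finset.card_filter_add_card_filter_not (s := (Finset.univ : Finset (Fin n))) (fun x => g x = x)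
      rw [Finset.card_univ, Fintype.card_fin] at this
      have h2 : g.support = Finset.univ.filter (fun x => ¬ g x = x) := by
        ext x; simp
      rw [h2]
      omega

theorem la_W {ι : Type*} [LinearOrder ι] [Fintype ι] 
    (Y W : Matrix ι ι ℤ) (a b : ι → ℤ)
    (hY : ∀ i j, Y i j ≠ 0 → j ≤ i) (hYb : ∀ i, Y i i = b i) (hb : ∀ i, b i ≠ 0)
    (hYW : Y.transpose * W = Matrix.diagonal (fun i => a i * b i)) :
    (∀ i j, j < i → W i j = 0) ∧ ∀ i, W i i = a i := by
  have h1 : ∀ j i, j < i → W i j = 0 := by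
    intro j i
    induction i using WellFoundedGT.induction with
    | ind i ih =>
      intro hij
      have h := congrFun (congrFun hYW i) j
      rw [Matrix.mul_apply, Matrix.diagonal_apply_ne _ hij.ne', Finset.sum_eq_single i] at h
      · rw [Matrix.transpose_apply, hYb] at h
        exact (mul_eq_zero.mp h).resolve_left (hb i)
      · intro k _ hk
        by_cases hz : Y k i = 0
        · simp [hz]
        · have := lt_of_le_of_ne (hY k i hz) (Ne.symm hk)
          rw [ih k this (hij.trans this), mul_zero]
      · simp
  refine ⟨fun i j => h1 j i, fun i => ?_⟩
  have h := congrFun (congrFun hYW i) i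
  rw [Matrix.mul_apply, Matrix.diagonal_apply_eq, Finset.sum_eq_single i] at h
  · rw [Matrix.transpose_apply, hYb, mul_comm] at h
    exact mul_right_cancel₀ (hb i) h
  · intro k _ hk
    by_cases hz : Y k i = 0
    · simp [hz]
    · have := lt_of_le_of_ne (hY k i hz) (Ne.symm hk)
      rw [h1 i k this, mul_zero]
  · simp

theorem la_main {ι : Type*} [LinearOrder ι] [Fintype ι] (p : ι → Prop) 
    [Fintype {i // p i}] [DecidableEq {i // p i}]
    (hp : ∀ i j, i ≤ j → p j → p i)
    (X D : Matrix ι ι ℤ) (a b : ι → ℤ)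
    (hD1 : ∀ i, D i i = 1) (hD : ∀ i j, D i j ≠ 0 → i ≤ j)
    (hY : ∀ i j, (D * X) i j ≠ 0 → j ≤ i) (hYb : ∀ i, (D * X) i i = b i)
    (hb : ∀ i, b i ≠ 0) (ha : ∀ i, a i ≠ 0)
    (hX : X.transpose * X = Matrix.diagonal (fun i => a i * b i)) :
    ((LinearIndependent ℤ fun l : {i // p i} => fun m : {i // p i} => X l.1 m.1) ∧
      Submodule.span ℤ (Set.range fun l : {i // p i} => fun m : {i // p i} => X l.1 m.1) =
        Submodule.span ℤ (Set.range fun l : ι => fun m : {i // p i} => X l m.1)) ∧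
    (Matrix.of fun l m : {i // p i} => X l.1 m.1).det = ∏ m : {i // p i}, a m.1 := by
  have hdetD : D.det = 1 := by
    rw [Matrix.det_of_isUpperTriangular]
    · simp [hD1]
    · intro i j hij
      by_contra h
      exact absurd (hD i j h) (not_le.mpr hij)
  have hu : IsUnit D.transpose.det := by rw [Matrix.det_transpose, hdetD]; exact isUnit_one
  set W : Matrix ι ι ℤ := D.transpose⁻¹ * X with hW
  have hXW : X = D.transpose * W := by
    rw [hW, ← Matrix.mul_assoc, Matrix.mul_nonsing_inv _ hu, Matrix.one_mul]
  have hYW : (D * X).transpose * W = Matrix.diagonal (fun i => a i * b i) := by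
    rw [Matrix.transpose_mul, Matrix.mul_assoc, ← hXW, hX]
  obtain ⟨hW0, hWa⟩ := la_W (D * X) W a b hY hYb hb hYW
  -- restricted
  let Dp : Matrix {i // p i} {i // p i} ℤ := fun l m => D m.1 l.1
  let Wp : Matrix {i // p i} {i // p i} ℤ := fun l m => W l.1 m.1
  let Xp : Matrix {i // p i} {i // p i} ℤ := fun l m => X l.1 m.1
  have key : ∀ (l : ι) (m : {i // p i}), X l m.1 = ∑ k : {i // p i}, D k.1 l * Wp k m := by
    intro l m
    conv_lhs => rw [hXW]
    rw [Matrix.mul_apply]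
    simp only [Matrix.transpose_apply, Wp]
    symm
    rw [← Finset.sum_subtype (p := p) (Finset.univ.filter p) (by simp) (fun k => D k l * W k m.1)]
    · apply Finset.sum_subset (Finset.filter_subset _ _)
      intro k _ hk
      have hk' : ¬ p k := by simpa using hk
      have : m.1 < k := by
        by_contra h
        exact hk' (hp _ _ (not_lt.mp h) m.2)
      rw [hW0 _ _ this, mul_zero]
  have hXp : Xp = Dp * Wp := by
    ext l m
    rw [Matrix.mul_apply]
    exact key l.1 m
  have hdetDp : Dp.det = 1 := by
    rw [Matrix.det_of_isLowerTriangular]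
    · simp [Dp, hD1]
    · intro i j hij
      by_contra h
      exact absurd (hD _ _ h) (not_le.mpr hij)
  have hdetWp : Wp.det = ∏ m : {i // p i}, a m.1 := by
    rw [Matrix.det_of_isUpperTriangular]
    · simp [Wp, hWa]
    · intro i j hij
      exact hW0 _ _ hij
  have hdet : Xp.det = ∏ m : {i // p i}, a m.1 := by
    rw [hXp, Matrix.det_mul, hdetDp, hdetWp, one_mul]
  refine ⟨⟨?_, ?_⟩, hdet⟩
  · apply Matrix.linearIndependent_rows_of_det_ne_zero (A := Xp)
    rw [hdet]
    exact Finset.prod_ne_zero_iff.mpr fun i _ => ha _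
  · have hud : IsUnit Dp.det := by rw [hdetDp]; exact isUnit_one
    have hWX : Wp = Dp⁻¹ * Xp := by
      rw [hXp, ← Matrix.mul_assoc, Matrix.nonsing_inv_mul _ hud, Matrix.one_mul]
    apply le_antisymm
    · apply Submodule.span_mono
      rintro _ ⟨l, rfl⟩
      exact ⟨l.1, rfl⟩
    · rw [Submodule.span_le]
      rintro _ ⟨l, rfl⟩
      have e1 : (fun m : {i // p i} => X l m.1) = ∑ k : {i // p i}, D k.1 l • Wp k := by
        ext m
        rw [key, Finset.sum_apply]
        rfl
      simp only [SetLike.mem_coe]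
      rw [e1]
      refine Submodule.sum_mem _ fun k _ => Submodule.smul_mem _ _ ?_
      have e2 : Wp k = ∑ j, (Dp⁻¹) k j • Xp j := by
        ext m
        conv_lhs => rw [hWX]
        rw [Matrix.mul_apply, Finset.sum_apply]
        rfl
      rw [e2]
      exact Submodule.sum_mem _ fun j _ => Submodule.smul_mem _ _ (Submodule.subset_span ⟨j, rfl⟩)

theorem permChar_card (lam : Nat.Partition n) (g : Equiv.Perm (Fin n)) (Ω : Type) [Fintype Ω]
    (q : Fin n → Ω) (hq : Function.Surjective q) (hg : ∀ x, q (g x) = q x)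
    (hs : ∀ x y, q x = q y → g.SameCycle x y) :
    permChar lam g = Fintype.card {φ : Ω → Fin (descList lam).length //
      ∀ j, (∑ ω ∈ Finset.univ.filter (fun ω => φ ω = j),
        (Finset.univ.filter fun x => q x = ω).card) = (descList lam).get j} := by
  have hsum : ∀ (φ : Ω → Fin (descList lam).length) (j : Fin (descList lam).length),
      (Finset.univ.filter fun x => φ (q x) = j).card =
      ∑ ω ∈ Finset.univ.filter (fun ω => φ ω = j),
        (Finset.univ.filter fun x => q x = ω).card := by
    intro φ j
    rw [Finset.card_eq_sum_card_fiberwise (f := q)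
      (t := Finset.univ.filter (fun ω => φ ω = j))]
    · apply Finset.sum_congr rfl
      intro ω hω
      congr 1
      ext x
      simp only [Finset.mem_filter, Finset.mem_univ, true_and] at hω ⊢
      constructor
      · exact fun h => h.2
      · intro h
        exact ⟨by rw [h, hω], h⟩
    · intro x hx
      simpa using hx
  unfold permChar
  symm
  apply Fintype.card_congr
  refine Equiv.ofBijective (fun φ => ⟨fun x => φ.1 (q x), fun x => congrArg φ.1 (hg x), fun j => ?_⟩) ⟨?_, ?_⟩
  · rw [← φ.2 j, ← hsum]
  · intro φ ψ h
    apply Subtype.ext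
    funext ω
    obtain ⟨x, rfl⟩ := hq ω
    exact congrFun (congrArg Subtype.val h) x
  · rintro ⟨f, hf, hc⟩
    have hpow : ∀ (k : ℕ) x, f ((g ^ k) x) = f x := by
      intro k
      induction k with
      | zero => intro x; simp
      | succ k ih => intro x; rw [pow_succ, Equiv.Perm.mul_apply, ih, hf]
    have hfq : ∀ x y, q x = q y → f x = f y := by
      intro x y h
      obtain ⟨k, hk⟩ := (hs x y h).exists_nat_pow_eq
      rw [← hk, hpow]
    have hfe : ∀ x, f (Function.surjInv hq (q x)) = f x := fun x =>
      hfq _ _ (Function.surjInv_eq hq _)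
    refine ⟨⟨fun ω => f (Function.surjInv hq ω), fun j => ?_⟩, ?_⟩
    · rw [← hsum, ← hc j]
      simp only [hfe]
    · apply Subtype.ext
      funext x
      exact hfe x

theorem map_get_descList (lam : Nat.Partition n) :
    Finset.univ.val.map (descList lam).get = lam.parts := by
  rw [← coe_descList, Fin.univ_val_map, List.ofFn_get]

theorem permChar_ne_zero (lam : Nat.Partition n) (g : Equiv.Perm (Fin n))
    (h : permChar lam g ≠ 0) : ¬ plex lam (cycleTypePartition g) := by
  intro hlt
  obtain ⟨Ω, _, q, hq, hg, hs, hm⟩ := exists_orbits g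
  rw [permChar_card lam g Ω q hq hg hs] at h
  obtain ⟨φ, hφ⟩ := Fintype.card_pos_iff.mp (Nat.pos_of_ne_zero h)
  have h1 := plex_hfun hlt
  rw [← hm, ← map_get_descList, Multiset.map_map, Multiset.map_map] at h1
  apply absurd h1 (not_lt.mpr _)
  change ∑ ω : Ω, hfun n _ ≤ ∑ j, hfun n ((descList lam).get j)
  rw [← Finset.sum_fiberwise (Finset.univ) φ]
  apply Finset.sum_le_sum
  intro j _
  rw [← hφ j]
  exact hfun_sum n _ _

theorem exists_equiv_of_map {Ω κ : Type*} [Fintype Ω] [Fintype κ] (s : Ω → ℕ) (t : κ → ℕ)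
    (h : Finset.univ.val.map s = Finset.univ.val.map t) : ∃ e : Ω ≃ κ, ∀ ω, t (e ω) = s ω := by
  have hc : ∀ c, Nonempty ({a // s a = c} ≃ {b // t b = c}) := by
    intro c
    rw [← Fintype.card_eq, Fintype.card_subtype, Fintype.card_subtype]
    have := congrArg (Multiset.count c) h
    rw [Multiset.count_map, Multiset.count_map] at this
    simp only [eq_comm (a := c)] at this
    exact this
  exact ⟨Equiv.ofFiberEquiv fun c => (hc c).some, fun ω => Equiv.ofFiberEquiv_map _ ω⟩

theorem permChar_diag (g : Equiv.Perm (Fin n)) :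
    permChar (cycleTypePartition g) g = bNum (cycleTypePartition g) := by
  obtain ⟨Ω, _, q, hq, hg, hs, hm⟩ := exists_orbits g
  rw [permChar_card _ g Ω q hq hg hs]
  set μ := cycleTypePartition g with hμ
  set s : Ω → ℕ := fun ω => (Finset.univ.filter fun x => q x = ω).card with hs'
  obtain ⟨e, he⟩ := exists_equiv_of_map s (descList μ).get (by rw [hm, map_get_descList])
  have hcard := DomMulAct.stabilizer_card' (descList μ).get
  have hb : bNum μ = ∏ i ∈ Finset.univ.image (descList μ).get,
      (Fintype.card ({a // (descList μ).get a = i})).factorial := by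
    unfold bNum
    have h1 : μ.parts.toFinset = Finset.univ.image (descList μ).get := by
      rw [← map_get_descList]; rfl
    rw [h1]
    apply Finset.prod_congr rfl
    intro i _
    congr 1
    conv_lhs => rw [← map_get_descList, Multiset.count_map]
    rw [Fintype.card_subtype]
    simp only [eq_comm (a := i)]
    rfl
  rw [hb, ← hcard]
  symm
  apply Fintype.card_congr
  have hpos : ∀ j, 0 < (descList μ).get j := by
    intro j
    apply μ.parts_pos
    rw [← coe_descList]
    exact List.get_mem _ _
  have hfib : ∀ (σ : Equiv.Perm (Fin (descList μ).length)) j,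
      ∑ ω ∈ Finset.univ.filter (fun ω => σ (e ω) = j), s ω = (descList μ).get (σ.symm j) := by
    intro σ j
    have : Finset.univ.filter (fun ω => σ (e ω) = j) = {e.symm (σ.symm j)} := by
      ext ω
      simp only [Finset.mem_filter, Finset.mem_univ, true_and, Finset.mem_singleton]
      rw [Equiv.eq_symm_apply, Equiv.eq_symm_apply]
    rw [this, Finset.sum_singleton, ← he, Equiv.apply_symm_apply]
  refine Equiv.ofBijective (fun σ => ⟨fun ω => σ.1 (e ω), fun j => ?_⟩) ⟨?_, ?_⟩
  · have h1 := hfib σ.1 j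
    have h2 := congrFun σ.2 (σ.1.symm j)
    simp only [Function.comp, Equiv.apply_symm_apply] at h2
    rw [h2]
    exact h1
  · intro σ τ h
    apply Subtype.ext
    ext i
    have := congrFun (congrArg Subtype.val h) (e.symm i)
    simp only [Equiv.apply_symm_apply] at this
    rw [this]
  · rintro ⟨φ, hφ⟩
    have hsurj : Function.Surjective (φ ∘ e.symm) := by
      intro j
      have h1 := hφ j
      have h2 : (Finset.univ.filter (fun ω => φ ω = j)).Nonempty := by
        rw [Finset.nonempty_iff_ne_empty]
        intro h3
        rw [h3, Finset.sum_empty] at h1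
        exact absurd h1 (hpos j).ne
      obtain ⟨ω, hω⟩ := h2
      exact ⟨e ω, by simpa using hω⟩
    let σ : Equiv.Perm (Fin (descList μ).length) :=
      Equiv.ofBijective _ ⟨Finite.injective_iff_surjective.mpr hsurj, hsurj⟩
    have hσ : ∀ ω, σ (e ω) = φ ω := by
      intro ω
      change φ (e.symm (e ω)) = φ ω
      rw [Equiv.symm_apply_apply]
    refine ⟨⟨σ, ?_⟩, ?_⟩
    · funext i
      have h1 := hfib σ (σ i)
      have h2 := hφ (σ i)
      simp only [hσ, Equiv.symm_apply_apply] at h1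
      rw [← h1]
      exact h2.symm
    · apply Subtype.ext
      funext ω
      exact hσ ω

/-! class sizes -/

theorem parts_split (μ : Nat.Partition n) :
    (μ.parts.filter (2 ≤ ·)).sum ≤ n ∧ μ.parts = μ.parts.filter (2 ≤ ·) +
      Multiset.replicate (n - (μ.parts.filter (2 ≤ ·)).sum) 1 := by
  have h1 := Multiset.filter_add_not (2 ≤ ·) μ.parts
  have h2 : μ.parts.filter (fun x => ¬ 2 ≤ x) =
      Multiset.replicate (μ.parts.filter (fun x => ¬ 2 ≤ x)).card 1 := by
    rw [Multiset.eq_replicate_card]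
    intro b hb
    have h3 := Multiset.mem_filter.mp hb
    have := μ.parts_pos h3.1
    omega
  have h3 := μ.parts_sum
  rw [← h1, h2, Multiset.sum_add, Multiset.sum_replicate, smul_eq_mul, mul_one] at h3
  refine ⟨by omega, ?_⟩
  conv_lhs => rw [← h1, h2]
  congr 2
  omega

theorem ctp_eq_iff (g : Equiv.Perm (Fin n)) (μ : Nat.Partition n) :
    cycleTypePartition g = μ ↔ g.cycleType = μ.parts.filter (2 ≤ ·) := by
  constructor
  · rintro rfl
    rw [ctp_parts, Multiset.filter_add, Multiset.filter_eq_self.2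
      fun _ => Equiv.Perm.two_le_of_mem_cycleType, Multiset.filter_eq_nil.2, add_zero]
    intro a h
    rw [Multiset.eq_of_mem_replicate h]
    decide
  · intro h
    apply Nat.Partition.ext
    rw [ctp_parts, (parts_split μ).2, ← h, Equiv.Perm.sum_cycleType]

theorem class_card (μ : Nat.Partition n) :
    (Finset.univ.filter fun g : Equiv.Perm (Fin n) => cycleTypePartition g = μ).card * zNum μ =
      n.factorial := by
  have h := Equiv.Perm.card_of_cycleType_mul_eq (Fin n) (μ.parts.filter (2 ≤ ·))
  obtain ⟨hle, hsp⟩ := parts_split μ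
  rw [if_pos ⟨by rwa [Fintype.card_fin], fun a ha => (Multiset.mem_filter.mp ha).2⟩,
    Fintype.card_fin] at h
  rw [← h]
  simp only [ctp_eq_iff]
  set m := μ.parts.filter (2 ≤ ·) with hm
  have hm2 : ∀ i ∈ m, 2 ≤ i := fun a ha => (Multiset.mem_filter.mp ha).2
  have h1m : 1 ∉ m := fun h => absurd (hm2 1 h) (by norm_num)
  congr 1
  · unfold zNum aNum bNum
    have e1 : μ.parts.prod = m.prod := by
      rw [hsp]; simp
    have e2 : ∏ i ∈ μ.parts.toFinset, (μ.parts.count i).factorial =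
        (n - m.sum).factorial * ∏ i ∈ m.toFinset, (m.count i).factorial := by
      have e3 : ∏ i ∈ μ.parts.toFinset, (μ.parts.count i).factorial =
          ∏ i ∈ insert 1 m.toFinset, (μ.parts.count i).factorial := by
        apply Finset.prod_subset
        · intro i hi
          rw [Multiset.mem_toFinset, hsp, Multiset.mem_add] at hi
          rcases hi with hi | hi
          · simp [hi]
          · simp [Multiset.eq_of_mem_replicate hi]
        · intro i _ hi
          rw [Multiset.mem_toFinset] at hi
          simp [Multiset.count_eq_zero_of_notMem hi]
      rw [e3, Finset.prod_insert (by simpa using h1m)]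
      congr 1
      · rw [hsp, Multiset.count_add, Multiset.count_eq_zero_of_notMem h1m,
          Multiset.count_replicate_self, zero_add]
      · apply Finset.prod_congr rfl
        intro i hi
        have := hm2 i (by simpa using hi)
        rw [hsp, Multiset.count_add, Multiset.count_replicate, if_neg (by omega), add_zero]
    rw [e1, e2]
    ring

theorem ctp_surj (μ : Nat.Partition n) : ∃ g : Equiv.Perm (Fin n), cycleTypePartition g = μ := by
  have h := class_card μ
  by_contra! hne
  rw [Finset.filter_false_of_mem (fun g _ => hne g)] at h
  simp only [Finset.card_empty, zero_mul] at h
  exact absurd h.symm (Nat.factorial_ne_zero n)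

theorem row_orth (X : Nat.Partition n → Nat.Partition n → ℤ) (hX : IsCharTable X)
    (l m : Nat.Partition n) :
    ∑ g : Equiv.Perm (Fin n), X l (cycleTypePartition g) * X m (cycleTypePartition g) =
      if l = m then (n.factorial : ℤ) else 0 := by
  choose V hV hVc using hX.1
  have := hV l
  have := hV m
  have hcard : Nat.card (Equiv.Perm (Fin n)) = n.factorial := by
    rw [Nat.card_perm, Nat.card_fin]
  have hne : (Nat.card (Equiv.Perm (Fin n)) : ℂ) ≠ 0 := by
    rw [hcard]; exact_mod_cast Nat.factorial_ne_zero n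
  let : Invertible (Nat.card (Equiv.Perm (Fin n)) : ℂ) := invertibleOfNonzero hne
  have h := FDRep.char_orthonormal (V l) (V m)
  have hinv : ∀ g : Equiv.Perm (Fin n), cycleTypePartition g⁻¹ = cycleTypePartition g := by
    intro g
    rw [ctp_eq_iff, Equiv.Perm.cycleType_inv, ← ctp_eq_iff]
  have hiso : Nonempty (V l ≅ V m) ↔ l = m := by
    constructor
    · rintro ⟨i⟩
      apply hX.2.2
      funext μ
      obtain ⟨g, rfl⟩ := ctp_surj μ
      have := congrFun (FDRep.char_iso i) g
      rw [hVc, hVc] at this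
      exact_mod_cast this
    · rintro rfl
      exact ⟨CategoryTheory.Iso.refl _⟩
  simp only [hVc, hinv, hiso] at h
  rw [inv_mul_eq_iff_eq_mul₀ hne, hcard] at h
  have h' : ((∑ g : Equiv.Perm (Fin n), X l (cycleTypePartition g) * X m (cycleTypePartition g) : ℤ) : ℂ)
      = ((if l = m then (n.factorial : ℤ) else 0 : ℤ) : ℂ) := by
    push_cast
    rw [h]
    split_ifs <;> simp
  exact_mod_cast h'

theorem col_orth (X : Nat.Partition n → Nat.Partition n → ℤ) (hX : IsCharTable X) :
    (Matrix.of X).transpose * (Matrix.of X) =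
      Matrix.diagonal (fun i => (aNum i : ℤ) * (bNum i : ℤ)) := by
  let Q : Matrix (Nat.Partition n) (Nat.Partition n) ℚ := Matrix.of fun l m => (X l m : ℚ)
  have hf : (n.factorial : ℚ) ≠ 0 := by exact_mod_cast Nat.factorial_ne_zero n
  have hz : ∀ μ : Nat.Partition n, (zNum μ : ℚ) ≠ 0 := by
    intro μ h0
    have h := class_card μ
    have : zNum μ = 0 := by exact_mod_cast h0
    rw [this, mul_zero] at h
    exact Nat.factorial_ne_zero n h.symm
  have hrow : Q * (Matrix.diagonal (fun μ => (zNum μ : ℚ)⁻¹) * Q.transpose) = 1 := by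
    ext l m
    rw [Matrix.mul_apply]
    simp only [Matrix.diagonal_mul, Matrix.transpose_apply, Q, Matrix.of_apply]
    have h := row_orth X hX l m
    rw [← Finset.sum_fiberwise Finset.univ (cycleTypePartition (n := n))] at h
    have h2 : ∀ μ : Nat.Partition n, ∑ g ∈ Finset.univ.filter
        (fun g : Equiv.Perm (Fin n) => cycleTypePartition g = μ),
        X l (cycleTypePartition g) * X m (cycleTypePartition g) =
        ((Finset.univ.filter
        (fun g : Equiv.Perm (Fin n) => cycleTypePartition g = μ)).card : ℤ) * (X l μ * X m μ) := by
      intro μ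
      rw [Finset.sum_congr rfl (g := fun _ => X l μ * X m μ)]
      · rw [Finset.sum_const, nsmul_eq_mul]
      · intro g hg
        rw [(Finset.mem_filter.mp hg).2]
    simp only [h2] at h
    have h3 : (n.factorial : ℚ) * ∑ μ, (X l μ : ℚ) * ((zNum μ : ℚ)⁻¹ * (X m μ : ℚ)) =
        if l = m then (n.factorial : ℚ) else 0 := by
      have h4 := congrArg (Int.cast : ℤ → ℚ) h
      push_cast at h4
      rw [← h4, Finset.mul_sum]
      apply Finset.sum_congr rfl
      intro μ _
      have h5 : (n.factorial : ℚ) = ((Finset.univ.filter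
        (fun g : Equiv.Perm (Fin n) => cycleTypePartition g = μ)).card : ℚ) * zNum μ := by
        exact_mod_cast (class_card μ).symm
      rw [h5]
      field_simp [hz μ]
    rw [Matrix.one_apply]
    apply mul_left_cancel₀ hf
    rw [h3]
    split_ifs <;> simp
  have hcol := mul_eq_one_comm.mp hrow
  have hQ : Q.transpose * Q = Matrix.diagonal (fun μ => (zNum μ : ℚ)) := by
    have h := congrArg (fun M => Matrix.diagonal (fun μ => (zNum μ : ℚ)) * M) hcol
    simp only [← Matrix.mul_assoc, Matrix.diagonal_mul_diagonal, mul_inv_cancel₀ (hz _),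
      Matrix.diagonal_one, Matrix.one_mul, Matrix.mul_one] at h
    exact h
  ext l m
  have h := congrFun (congrFun hQ l) m
  rw [Matrix.mul_apply] at h ⊢
  simp only [Matrix.transpose_apply, Q, Matrix.diagonal_apply, Matrix.of_apply] at h ⊢
  have h' : ((∑ j, X j l * X j m : ℤ) : ℚ) =
      ((if l = m then (aNum l : ℤ) * (bNum l : ℤ) else 0 : ℤ) : ℚ) := by
    push_cast
    rw [h]
    simp only [zNum]
    split_ifs <;> push_cast <;> rfl
  exact_mod_cast h'

/-- **Theorem 3.3.** For a partition `α` of `n`: (1) the restrictions of the irreducible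
characters `χ^λ`, `λ < α`, to the classes of cycle type `< α` form a ℤ-basis for the ℤ-span of
the restrictions of all the irreducible characters to those classes, and (2)
`det X_(α) = ∏_{μ < α} a_μ`, where `X_(α) = (χ^λ_μ)_{λ,μ < α}`. -/
theorem small_basic_set_and_det (n : ℕ) (X : Nat.Partition n → Nat.Partition n → ℤ)
    (hX : IsCharTable X) (α : Nat.Partition n) :
    ((LinearIndependent ℤ fun lam : {lam : Nat.Partition n // plex lam α} =>
        fun μ : {μ : Nat.Partition n // plex μ α} => X lam.1 μ.1) ∧
      Submodule.span ℤ (Set.range fun lam : {lam : Nat.Partition n // plex lam α} =>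
          fun μ : {μ : Nat.Partition n // plex μ α} => X lam.1 μ.1) =
        Submodule.span ℤ (Set.range fun lam : Nat.Partition n =>
          fun μ : {μ : Nat.Partition n // plex μ α} => X lam μ.1)) ∧
    (Matrix.of fun lam mu : {μ : Nat.Partition n // plex μ α} => X lam.1 mu.1).det =
      ∏ μ : {μ : Nat.Partition n // plex μ α}, (aNum μ.1 : ℤ) := by
  obtain ⟨d, hd1, hd, hdX⟩ := hX.2.1
  let : LinearOrder (Nat.Partition n) := pOrder n
  have hle : ∀ l m : Nat.Partition n, plexLE l m → l ≤ m := by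
    rintro l m (rfl | h)
    · exact le_rfl
    · exact le_of_lt (show l < m from h)
  have hDX : ∀ l (g : Equiv.Perm (Fin n)), (Matrix.of d * Matrix.of X) l (cycleTypePartition g) =
      (permChar l g : ℤ) := by
    intro l g
    rw [Matrix.mul_apply, hdX]
    rfl
  have hbpos : ∀ μ : Nat.Partition n, (bNum μ : ℤ) ≠ 0 := by
    intro μ
    unfold bNum
    exact_mod_cast Finset.prod_ne_zero_iff.mpr fun i _ => Nat.factorial_ne_zero _
  have hapos : ∀ μ : Nat.Partition n, (aNum μ : ℤ) ≠ 0 := by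
    intro μ h
    have h0 : aNum μ = 0 := by exact_mod_cast h
    exact absurd (μ.parts_pos (Multiset.prod_eq_zero_iff.mp h0)) (lt_irrefl _)
  have main := la_main (ι := Nat.Partition n) (fun μ => plex μ α)
    (fun i j hij hj => lt_of_le_of_lt hij (show j < α from hj))
    (Matrix.of X) (Matrix.of d) (fun μ => (aNum μ : ℤ)) (fun μ => (bNum μ : ℤ))
    hd1 (fun i j h => hle _ _ (hd i j h))
    (fun i j h => by
      obtain ⟨g, rfl⟩ := ctp_surj j
      rw [hDX] at h
      exact not_lt.mp (permChar_ne_zero i g (by exact_mod_cast h)))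
    (fun i => by
      obtain ⟨g, rfl⟩ := ctp_surj i
      rw [hDX, permChar_diag])
    hbpos hapos (by convert col_orth X hX)
  simp only [Matrix.of_apply] at main
  convert main

end SnTable
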